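/- Let X be a totally disconnected compact metric space and α : X → X a homeomorphism, with E the closure of {α^n : n ∈ ℤ} in the self-maps of X with the product topology. The following are equivalent: (1) the system is almost distal, i.e., every forward proximal pair is forward asymptotic and every backward proximal pair is backward asymptotic; (2) E is nearly simple, i.e., E has a unique minimal two-sided ideal and every element of E having no compositional inverse in E lies in that ideal; (3) E is completely regular, i.e., for every f ∈ E there exists g ∈ E with f ∘ g ∘ f = f and f ∘ g = g ∘ f. -/

import Mathlib

/-- The `n`-th power (`n : ℤ`) of a homeomorphism `α`, as a self-map. -/
def zIter {X : Type*} [TopologicalSpace X] (α : X ≃ₜ X) (n : ℤ) : X → X :=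
  if 0 ≤ n then (⇑α)^[n.toNat] else (⇑α.symm)^[(-n).toNat]

/-- A two-sided ideal of the subsemigroup `S` of self-maps of `X` (under composition). -/
def IsIdealIn {X : Type*} (S I : Set (X → X)) : Prop :=
  I.Nonempty ∧ I ⊆ S ∧ ∀ f ∈ S, ∀ g ∈ I, f ∘ g ∈ I ∧ g ∘ f ∈ I

/-- The Ellis semigroup of the `ℤ`-action generated by the homeomorphism `α`. -/
def EllisZ {X : Type*} [TopologicalSpace X] (α : X ≃ₜ X) : Set (X → X) :=
  closure {h : X → X | ∃ n : ℤ, h = zIter α n}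

/-- The `ℤ`-action generated by `α` is almost distal: every forward proximal pair is
forward asymptotic and every backward proximal pair is backward asymptotic. -/
def AlmostDistalZ {X : Type*} [MetricSpace X] (α : X ≃ₜ X) : Prop :=
  (∀ x y : X,
    (∀ ε > 0, ∃ n : ℕ, dist ((⇑α)^[n] x) ((⇑α)^[n] y) < ε) →
    Filter.Tendsto (fun n : ℕ => dist ((⇑α)^[n] x) ((⇑α)^[n] y))
      Filter.atTop (nhds 0)) ∧
  (∀ x y : X,
    (∀ ε > 0, ∃ n : ℕ, dist ((⇑α.symm)^[n] x) ((⇑α.symm)^[n] y) < ε) →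
    Filter.Tendsto (fun n : ℕ => dist ((⇑α.symm)^[n] x) ((⇑α.symm)^[n] y))
      Filter.atTop (nhds 0))

/-- `E` is nearly simple: it has a unique minimal two-sided ideal and every element of `E`
with no compositional inverse in `E` lies in that ideal. -/
def NearlySimpleZ {X : Type*} [TopologicalSpace X] (α : X ≃ₜ X) : Prop :=
  ∃ K : Set (X → X),
    IsIdealIn (EllisZ α) K ∧
    (∀ I : Set (X → X), IsIdealIn (EllisZ α) I → I ⊆ K → I = K) ∧
    (∀ I : Set (X → X), IsIdealIn (EllisZ α) I →
      (∀ J : Set (X → X), IsIdealIn (EllisZ α) J → J ⊆ I → J = I) → I = K) ∧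
    (∀ f ∈ EllisZ α, (¬∃ g ∈ EllisZ α, f ∘ g = id ∧ g ∘ f = id) → f ∈ K)

/-- `E` is completely regular. -/
def CompletelyRegularZ {X : Type*} [TopologicalSpace X] (α : X ≃ₜ X) : Prop :=
  ∀ f ∈ EllisZ α, ∃ g ∈ EllisZ α, f ∘ g ∘ f = f ∧ f ∘ g = g ∘ f

/-!
The Ellis semigroup `E` consists of the powers of `α` and of the cluster points of its forward and
of its backward iterates. Each set `F` of cluster points is a left ideal of `E`, and by compactness
a pair `x, y` is proximal iff some `e ∈ F` identifies it and asymptotic iff every `f ∈ F` does. Thus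
almost distality says that all maps in the same `F` have the same fibres.

If so, a left ideal inside `F` contains an idempotent `e`, and `f = f ∘ e` for every `f ∈ F`; hence
`F` lies in every two-sided ideal, and the cluster points form the least ideal of `E`. By Ellis
theory, the minimal two-sided ideal is a union of minimal left ideals, whose elements are completely
regular. Finally, if a proximal pair leaves a clopen neighbourhood `W` of the diagonal infinitely
often, then a cluster point `f` along the last exit times before long stays in `W` sends the pair
outside `W` while its strict future stays in `W`. Every `g ∈ E` then sends the image of the pair
under `f ∘ f` into `W`, so `g ∘ f ∘ f ≠ f`, contradicting complete regularity.
-/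

open Set Filter Topology Uniformity

section SelfMapSemigroup

variable {X : Type*} {S I J L F : Set (X → X)}

/-- A left ideal of the subsemigroup `S` of self-maps of `X`; as in `IsIdealIn`, it is nonempty. -/
def IsLeftIdealIn (S L : Set (X → X)) : Prop :=
  L.Nonempty ∧ L ⊆ S ∧ ∀ f ∈ S, ∀ g ∈ L, f ∘ g ∈ L

theorem IsIdealIn.isLeftIdealIn (hI : IsIdealIn S I) : IsLeftIdealIn S I :=
  ⟨hI.1, hI.2.1, fun f hf g hg => (hI.2.2 f hf g hg).1⟩

namespace IsLeftIdealIn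

theorem self (hne : S.Nonempty) (hS : ∀ f ∈ S, ∀ g ∈ S, f ∘ g ∈ S) : IsLeftIdealIn S S :=
  ⟨hne, Subset.rfl, hS⟩

theorem image_comp_right (hS : ∀ f ∈ S, ∀ g ∈ S, f ∘ g ∈ S) (hL : IsLeftIdealIn S L)
    {s : X → X} (hs : s ∈ S) : IsLeftIdealIn S ((· ∘ s) '' L) := by
  obtain ⟨hne, hLS, hLmul⟩ := hL
  refine ⟨hne.image _, ?_, ?_⟩
  · rintro _ ⟨l, hl, rfl⟩
    exact hS l (hLS hl) s hs
  · rintro f hf _ ⟨l, hl, rfl⟩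
    exact ⟨f ∘ l, hLmul f hf l hl, rfl⟩

theorem image_comp_right_eq_of_minimal (hS : ∀ f ∈ S, ∀ g ∈ S, f ∘ g ∈ S)
    (hJ : IsLeftIdealIn S J) (hL : Minimal (IsLeftIdealIn S) L) {l : X → X} (hl : l ∈ L) :
    (· ∘ l) '' J = L := by
  refine hL.eq_of_subset (hJ.image_comp_right hS (hL.prop.2.1 hl)) ?_
  rintro _ ⟨j, hj, rfl⟩
  exact hL.prop.2.2 j (hJ.2.1 hj) l hl

theorem minimal_image_comp_right (hS : ∀ f ∈ S, ∀ g ∈ S, f ∘ g ∈ S)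
    (hL : Minimal (IsLeftIdealIn S) L) {s : X → X} (hs : s ∈ S) :
    Minimal (IsLeftIdealIn S) ((· ∘ s) '' L) := by
  refine ⟨hL.prop.image_comp_right hS hs, fun J hJ hJL => ?_⟩
  have hpre : IsLeftIdealIn S {l ∈ L | l ∘ s ∈ J} := by
    obtain ⟨j, hj⟩ := hJ.1
    obtain ⟨l, hl, rfl⟩ := hJL hj
    exact ⟨⟨l, hl, hj⟩, fun l hl => hL.prop.2.1 hl.1,
      fun f hf l hl => ⟨hL.prop.2.2 f hf l hl.1, hJ.2.2 f hf _ hl.2⟩⟩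
  rintro _ ⟨l, hl, rfl⟩
  exact (hL.le_of_le hpre (sep_subset _ _) hl).2

theorem isIdealIn_image2_comp (hS : ∀ f ∈ S, ∀ g ∈ S, f ∘ g ∈ S) (hL : IsLeftIdealIn S L) :
    IsIdealIn S (image2 (· ∘ ·) L S) := by
  obtain ⟨hne, hLS, hLmul⟩ := hL
  refine ⟨hne.image2 (hne.mono hLS), ?_, ?_⟩
  · rintro _ ⟨l, hl, s, hs, rfl⟩
    exact hS l (hLS hl) s hs
  · rintro f hf _ ⟨l, hl, s, hs, rfl⟩
    exact ⟨⟨f ∘ l, hLmul f hf l hl, s, hs, rfl⟩, ⟨l, hl, s ∘ f, hS s hs f hf, rfl⟩⟩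

end IsLeftIdealIn

section Compact

variable [TopologicalSpace X] [T2Space X]

theorem exists_idempotent_of_isCompact (hne : S.Nonempty) (hc : IsCompact S)
    (hS : ∀ f ∈ S, ∀ g ∈ S, f ∘ g ∈ S) : ∃ e ∈ S, e ∘ e = e := by
  let : Semigroup (X → X) := { mul := fun f g => f ∘ g, mul_assoc := fun _ _ _ => rfl }
  exact exists_idempotent_in_compact_subsemigroup (fun g => Pi.continuous_precomp g) S hne hc hS

namespace IsLeftIdealIn

theorem exists_idempotent (hc : IsCompact S) (hS : ∀ f ∈ S, ∀ g ∈ S, f ∘ g ∈ S)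
    (hJ : IsLeftIdealIn S J) : ∃ e ∈ J, e ∘ e = e := by
  obtain ⟨⟨j, hj⟩, hJS, hJmul⟩ := hJ
  have hideal := (self ⟨j, hJS hj⟩ hS).image_comp_right hS (hJS hj)
  obtain ⟨_, ⟨s, hs, rfl⟩, he⟩ := exists_idempotent_of_isCompact hideal.1
    (hc.image (Pi.continuous_precomp j)) fun f hf => hideal.2.2 f (hideal.2.1 hf)
  exact ⟨s ∘ j, hJmul s hs j hj, he⟩

theorem sInter_of_isChain {c : Set (Set (X → X))} (hne : c.Nonempty) (hchain : IsChain (· ⊆ ·) c)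
    (hc : ∀ L ∈ c, IsCompact L ∧ IsLeftIdealIn S L) : IsLeftIdealIn S (⋂₀ c) := by
  obtain ⟨L, hL⟩ := hne
  have : Nonempty c := ⟨⟨L, hL⟩⟩
  refine ⟨?_, (sInter_subset_of_mem hL).trans (hc L hL).2.2.1,
    fun f hf g hg N hN => (hc N hN).2.2.2 f hf g (hg N hN)⟩
  have hdirected : DirectedOn (· ⊇ ·) c := IsChain.directedOn hchain.symm
  rw [sInter_eq_iInter]
  exact IsCompact.nonempty_iInter_of_directed_nonempty_isCompact_isClosed _
    hdirected.directed_val (fun N => (hc N N.2).2.1) (fun N => (hc N N.2).1)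
    fun N => (hc N N.2).1.isClosed

/-- Zorn's lemma yields minimality among the compact left ideals; it extends to all left ideals
because every left ideal contains a compact one, of the form `S ∘ j`. -/
theorem exists_minimal_subset (hc : IsCompact S) (hS : ∀ f ∈ S, ∀ g ∈ S, f ∘ g ∈ S)
    (hJ : IsLeftIdealIn S J) : ∃ L ⊆ J, Minimal (IsLeftIdealIn S) L := by
  have hcompact {M : Set (X → X)} (hM : IsLeftIdealIn S M) :
      ∃ N ⊆ M, IsCompact N ∧ IsLeftIdealIn S N := by
    obtain ⟨⟨m, hm⟩, hMS, hMmul⟩ := hM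
    exact ⟨(· ∘ m) '' S, image_subset_iff.2 fun s hs => hMmul s hs m hm,
      hc.image (Pi.continuous_precomp m), (self ⟨m, hMS hm⟩ hS).image_comp_right hS (hMS hm)⟩
  obtain ⟨N, hNJ, hN⟩ := hcompact hJ
  have hbound : ∀ c ⊆ {L | IsCompact L ∧ IsLeftIdealIn S L}, IsChain (· ⊆ ·) c → c.Nonempty →
      ∃ lb ∈ {L | IsCompact L ∧ IsLeftIdealIn S L}, ∀ L ∈ c, lb ⊆ L := by
    rintro c hcS hchain ⟨L, hL⟩
    exact ⟨⋂₀ c, ⟨(hcS hL).1.of_isClosed_subset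
      (isClosed_sInter fun M hM => (hcS hM).1.isClosed) (sInter_subset_of_mem hL),
      sInter_of_isChain ⟨L, hL⟩ hchain hcS⟩, fun _ => sInter_subset_of_mem⟩
  obtain ⟨L, hLN, hL⟩ := zorn_superset_nonempty _ hbound N hN
  refine ⟨L, hLN.trans hNJ, hL.prop.2, fun M hM hML => ?_⟩
  obtain ⟨P, hPM, hP⟩ := hcompact hM
  exact (hL.le_of_le hP (hPM.trans hML)).trans hPM

theorem exists_idempotent_comp_eq_self_of_minimal (hc : IsCompact S)
    (hS : ∀ f ∈ S, ∀ g ∈ S, f ∘ g ∈ S) (hL : Minimal (IsLeftIdealIn S) L) {f : X → X}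
    (hf : f ∈ L) : ∃ e ∈ L, e ∘ e = e ∧ e ∘ f = f := by
  have hLc : IsCompact L := by
    rw [← image_comp_right_eq_of_minimal hS (self ⟨f, hL.prop.2.1 hf⟩ hS) hL hf]
    exact hc.image (Pi.continuous_precomp f)
  have hfix : IsClosed {h : X → X | h ∘ f = f} :=
    isClosed_singleton.preimage (Pi.continuous_precomp f)
  obtain ⟨h, hh, hhf⟩ := (image_comp_right_eq_of_minimal hS hL.prop hL hf).ge hf
  obtain ⟨e, ⟨heL, hef⟩, hee⟩ := exists_idempotent_of_isCompact (S := L ∩ {h | h ∘ f = f})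
    ⟨h, hh, hhf⟩ (hLc.inter_right hfix) fun a ha b hb =>
      ⟨hL.prop.2.2 a (hL.prop.2.1 ha.1) b hb.1, (congrArg (a ∘ ·) hb.2).trans ha.2⟩
  exact ⟨e, heL, hee, hef⟩

theorem exists_groupInverse_of_minimal (hc : IsCompact S) (hS : ∀ f ∈ S, ∀ g ∈ S, f ∘ g ∈ S)
    (hL : Minimal (IsLeftIdealIn S) L) {f : X → X} (hf : f ∈ L) :
    ∃ g ∈ S, f ∘ g ∘ f = f ∧ f ∘ g = g ∘ f := by
  have hsolve {l m : X → X} (hl : l ∈ L) (hm : m ∈ L) : ∃ k ∈ L, k ∘ l = m :=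
    (image_comp_right_eq_of_minimal hS hL.prop hL hl).ge hm
  obtain ⟨e, he, hee, hef⟩ := exists_idempotent_comp_eq_self_of_minimal hc hS hL hf
  have hright {l : X → X} (hl : l ∈ L) : l ∘ e = l := by
    obtain ⟨k, -, rfl⟩ := hsolve he hl
    rw [Function.comp_assoc, hee]
  obtain ⟨g, hg, hgf⟩ := hsolve hf he
  obtain ⟨k, hk, hkg⟩ := hsolve hg he
  have hkf : k = f := calc
    k = k ∘ g ∘ f := by rw [hgf, hright hk]
    _ = f := by rw [← Function.comp_assoc, hkg, hef]
  have hfg : f ∘ g = e := hkf ▸ hkg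
  exact ⟨g, hL.prop.2.1 hg, by rw [hgf, hright hf], by rw [hfg, hgf]⟩

theorem subset_of_isIdealIn_of_forall_fiber_eq (hc : IsCompact S)
    (hS : ∀ f ∈ S, ∀ g ∈ S, f ∘ g ∈ S) (hF : IsLeftIdealIn S F)
    (hfiber : ∀ e ∈ F, ∀ f ∈ F, ∀ x y, e x = e y → f x = f y) (hI : IsIdealIn S I) : F ⊆ I := by
  obtain ⟨⟨i, hi⟩, hIS, hImul⟩ := hI
  intro f hf
  have hFI : IsLeftIdealIn S (F ∩ I) :=
    ⟨⟨i ∘ f, hF.2.2 i (hIS hi) f hf, (hImul f (hF.2.1 hf) i hi).2⟩,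
      inter_subset_right.trans hIS,
      fun a ha b hb => ⟨hF.2.2 a ha b hb.1, (hImul a ha b hb.2).1⟩⟩
  obtain ⟨e, ⟨heF, heI⟩, hee⟩ := hFI.exists_idempotent hc hS
  have hfe : f ∘ e = f := funext fun x => hfiber e heF f hf (e x) x (congrFun hee x)
  exact hfe ▸ (hImul f (hF.2.1 hf) e heI).1

end IsLeftIdealIn

theorem IsIdealIn.exists_minimal_isLeftIdealIn_mem (hc : IsCompact S)
    (hS : ∀ f ∈ S, ∀ g ∈ S, f ∘ g ∈ S) (hI : Minimal (IsIdealIn S) I) {f : X → X} (hf : f ∈ I) :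
    ∃ L, Minimal (IsLeftIdealIn S) L ∧ f ∈ L := by
  obtain ⟨L, hLI, hL⟩ := hI.prop.isLeftIdealIn.exists_minimal_subset hc hS
  have hLS : image2 (· ∘ ·) L S = I := by
    refine hI.eq_of_subset (hL.prop.isIdealIn_image2_comp hS) ?_
    rintro _ ⟨l, hl, s, hs, rfl⟩
    exact (hI.prop.2.2 s hs l (hLI hl)).2
  obtain ⟨l, hl, s, hs, rfl⟩ := hLS.ge hf
  exact ⟨_, IsLeftIdealIn.minimal_image_comp_right hS hL hs, l, hl, rfl⟩

end Compact

end SelfMapSemigroup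

theorem mem_range_or_mapClusterPt_of_mem_closure_range {ι Y : Type*} [TopologicalSpace Y]
    [T1Space Y] {u : ι → Y} {y : Y} (hy : y ∈ closure (range u)) :
    y ∈ range u ∨ MapClusterPt y cofinite u := by
  refine or_iff_not_imp_right.2 fun hcluster => ?_
  obtain ⟨s, hs, hfin⟩ : ∃ s ∈ 𝓝 y, (u ⁻¹' s).Finite := by
    simp only [mapClusterPt_iff_frequently, not_forall, not_frequently, eventually_cofinite,
      not_not, exists_prop] at hcluster
    exact hcluster
  have hys : y ∈ closure (s ∩ range u) := mem_closure_iff_nhds.2 fun t ht => by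
    simpa only [inter_assoc] using mem_closure_iff_nhds.1 hy _ (inter_mem ht hs)
  rw [← image_preimage_eq_inter_range, (hfin.image u).isClosed.closure_eq] at hys
  exact image_subset_range _ _ hys

section ForwardLimits

variable {X : Type*} [TopologicalSpace X] {T f : X → X} {x y : X} {W : Set (X × X)}

/-- The limits, in the topology of pointwise convergence, of subnets of the forward iterates of
`T`. -/
def forwardLimits (T : X → X) : Set (X → X) :=
  {f | MapClusterPt f atTop fun n : ℕ => T^[n]}

theorem isClosed_forwardLimits : IsClosed (forwardLimits T) :=
  isClosed_setOfPred_clusterPt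

theorem forwardLimits_nonempty [CompactSpace X] : (forwardLimits T).Nonempty :=
  exists_clusterPt_of_compactSpace _

theorem mem_range_iterate_or_mem_forwardLimits [T1Space X]
    (hf : f ∈ closure (range fun n : ℕ => T^[n])) :
    f ∈ range (fun n : ℕ => T^[n]) ∨ f ∈ forwardLimits T := by
  rw [forwardLimits, ← Nat.cofinite_eq_atTop]
  exact mem_range_or_mapClusterPt_of_mem_closure_range hf

theorem mapClusterPt_pair_of_mem_forwardLimits (hf : f ∈ forwardLimits T) (x y : X) :
    MapClusterPt (f x, f y) atTop fun n : ℕ => (T^[n] x, T^[n] y) :=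
  MapClusterPt.continuousAt_comp (f := fun h : X → X => (h x, h y))
    ((continuous_apply x).prodMk (continuous_apply y)).continuousAt hf

theorem pair_mem_of_mem_forwardLimits (hf : f ∈ forwardLimits T) (hW : IsClosed W)
    (h : ∀ᶠ n : ℕ in atTop, (T^[n] x, T^[n] y) ∈ W) : (f x, f y) ∈ W :=
  hW.mem_of_mapClusterPt (mapClusterPt_pair_of_mem_forwardLimits hf x y) h

theorem frequently_pair_mem_of_mem_forwardLimits (hf : f ∈ forwardLimits T)
    (hW : W ∈ 𝓝 (f x, f y)) :
    ∃ᶠ n : ℕ in atTop, (T^[n] x, T^[n] y) ∈ W :=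
  (mapClusterPt_pair_of_mem_forwardLimits hf x y).frequently hW

theorem eq_of_iterate_eq_of_mem_forwardLimits [T2Space X] (hf : f ∈ forwardLimits T) {n : ℕ}
    (hn : T^[n] x = T^[n] y) : f x = f y := by
  refine pair_mem_of_mem_forwardLimits hf isClosed_diagonal ?_
  filter_upwards [eventually_ge_atTop n] with m hm
  obtain ⟨k, rfl⟩ := Nat.exists_eq_add_of_le' hm
  rw [mem_diagonal_iff, Function.iterate_add_apply, Function.iterate_add_apply, hn]

end ForwardLimits

section AlmostDistal

variable {X : Type*} [UniformSpace X] {T : X → X} {x y : X}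

/-- Forward proximality of a pair under a self-map, in terms of the uniform structure. -/
def IsForwardProximal (T : X → X) (x y : X) : Prop :=
  ∀ V ∈ 𝓤 X, ∃ n : ℕ, (T^[n] x, T^[n] y) ∈ V

/-- Forward asymptoticity of a pair under a self-map, in terms of the uniform structure. -/
def IsForwardAsymptotic (T : X → X) (x y : X) : Prop :=
  Tendsto (fun n : ℕ => (T^[n] x, T^[n] y)) atTop (𝓤 X)

/-- The forward half of almost distality; the backward half is `IsForwardAlmostDistal α.symm`. -/
def IsForwardAlmostDistal (T : X → X) : Prop :=
  ∀ x y, IsForwardProximal T x y → IsForwardAsymptotic T x y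

theorem IsForwardProximal.exists_mem_closure_range_iterate [CompactSpace X] [T2Space X]
    (hprox : IsForwardProximal T x y) :
    ∃ h ∈ closure (range fun n : ℕ => T^[n]), h x = h y := by
  by_contra! hne
  let C : Set (X × X) := (fun h : X → X => (h x, h y)) '' closure (range fun n : ℕ => T^[n])
  have hC : IsClosed C := (isClosed_closure.isCompact.image (by fun_prop)).isClosed
  have hcompl : Cᶜ ∈ 𝓤 X := by
    rw [← nhdsSet_diagonal_eq_uniformity, hC.isOpen_compl.mem_nhdsSet]
    rintro _ hdiag ⟨h, hmem, rfl⟩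
    exact hne h hmem hdiag
  obtain ⟨n, hn⟩ := hprox _ hcompl
  exact hn ⟨T^[n], subset_closure ⟨n, rfl⟩, rfl⟩

theorem isForwardProximal_iff_exists_mem_forwardLimits [CompactSpace X] [T2Space X] :
    IsForwardProximal T x y ↔ ∃ e ∈ forwardLimits T, e x = e y := by
  constructor
  · intro hprox
    obtain ⟨h, hmem, hxy⟩ := hprox.exists_mem_closure_range_iterate
    obtain ⟨n, rfl⟩ | hlim := mem_range_iterate_or_mem_forwardLimits hmem
    · obtain ⟨e, he⟩ := forwardLimits_nonempty (T := T)
      exact ⟨e, he, eq_of_iterate_eq_of_mem_forwardLimits he hxy⟩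
    · exact ⟨h, hlim, hxy⟩
  · rintro ⟨e, he, hxy⟩ V hV
    exact (frequently_pair_mem_of_mem_forwardLimits he
      (hxy ▸ nhds_le_uniformity (e x) hV)).exists

theorem isForwardAsymptotic_iff_forall_mem_forwardLimits [CompactSpace X] [T2Space X] :
    IsForwardAsymptotic T x y ↔ ∀ f ∈ forwardLimits T, f x = f y := by
  constructor
  · intro hasym f hf
    exact eq_of_uniformity_basis uniformity_hasBasis_closed fun {V} hV =>
      pair_mem_of_mem_forwardLimits hf hV.2 (hasym hV.1)
  · intro hlim
    refine uniformity_hasBasis_open.tendsto_right_iff.2 fun V hV => ?_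
    have hopen : IsOpen {h : X → X | (h x, h y) ∈ V} := hV.2.preimage (by fun_prop)
    have hmem : {h : X → X | (h x, h y) ∈ V} ∈ map (fun n : ℕ => T^[n]) atTop :=
      isCompact_univ.adherence_nhdset (by simp) hopen fun f _ hf => by
        have hxy : f x = f y := hlim f hf
        exact (hxy ▸ refl_mem_uniformity hV.1 : (f x, f y) ∈ V)
    exact hmem

theorem isForwardAlmostDistal_iff_forall_fiber_eq [CompactSpace X] [T2Space X] :
    IsForwardAlmostDistal T ↔
      ∀ e ∈ forwardLimits T, ∀ f ∈ forwardLimits T, ∀ x y, e x = e y → f x = f y := by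
  simp only [IsForwardAlmostDistal, isForwardProximal_iff_exists_mem_forwardLimits,
    isForwardAsymptotic_iff_forall_mem_forwardLimits]
  exact ⟨fun h e he f hf x y hxy => h x y ⟨e, he, hxy⟩ f hf,
    fun h x y ⟨e, he, hxy⟩ f hf => h e he f hf x y hxy⟩

theorem almostDistalZ_iff_isForwardAlmostDistal {X : Type*} [MetricSpace X] (α : X ≃ₜ X) :
    AlmostDistalZ α ↔ IsForwardAlmostDistal α ∧ IsForwardAlmostDistal α.symm := by
  have hprox (T : X → X) (x y : X) :
      IsForwardProximal T x y ↔ ∀ ε > 0, ∃ n : ℕ, dist (T^[n] x) (T^[n] y) < ε :=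
    Metric.uniformity_basis_dist.forall_iff fun _ _ hVW ⟨n, hn⟩ => ⟨n, hVW hn⟩
  simp only [AlmostDistalZ, IsForwardAlmostDistal, hprox, IsForwardAsymptotic,
    tendsto_uniformity_iff_dist_tendsto_zero]

end AlmostDistal

section Ellis

variable {X : Type*} [TopologicalSpace X] {α : X ≃ₜ X} {f g : X → X}

theorem ellisZ_eq_closure_union_range_iterate (α : X ≃ₜ X) :
    EllisZ α = closure (range (fun n : ℕ => (⇑α)^[n]) ∪ range fun n : ℕ => (⇑α.symm)^[n]) := by
  refine congrArg closure (Subset.antisymm ?_ (union_subset ?_ ?_))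
  · rintro _ ⟨n, rfl⟩
    by_cases hn : 0 ≤ n
    · exact Or.inl ⟨n.toNat, (if_pos hn).symm⟩
    · exact Or.inr ⟨(-n).toNat, (if_neg hn).symm⟩
  · rintro _ ⟨n, rfl⟩
    exact ⟨n, by simp [zIter]⟩
  · rintro _ ⟨n, rfl⟩
    obtain rfl | hn := n.eq_zero_or_pos
    · exact ⟨0, by simp [zIter]⟩
    · exact ⟨-n, by simp [zIter, hn.ne']⟩

theorem ellisZ_symm (α : X ≃ₜ X) : EllisZ α.symm = EllisZ α := by
  rw [ellisZ_eq_closure_union_range_iterate, ellisZ_eq_closure_union_range_iterate, union_comm,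
    Homeomorph.symm_symm]

theorem isClosed_ellisZ : IsClosed (EllisZ α) := isClosed_closure

theorem iterate_mem_ellisZ (α : X ≃ₜ X) (n : ℕ) : (⇑α)^[n] ∈ EllisZ α := by
  rw [ellisZ_eq_closure_union_range_iterate]
  exact subset_closure (Or.inl ⟨n, rfl⟩)

theorem ellisZ_subset_of_isClosed {C : Set (X → X)} (hC : IsClosed C)
    (hα : ∀ n : ℕ, (⇑α)^[n] ∈ C) (hαsymm : ∀ n : ℕ, (⇑α.symm)^[n] ∈ C) : EllisZ α ⊆ C := by
  rw [ellisZ_eq_closure_union_range_iterate]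
  exact closure_minimal (union_subset (range_subset_iff.2 hα) (range_subset_iff.2 hαsymm)) hC

theorem comp_mem_of_mem_ellisZ {C : Set (X → X)} (hC : IsClosed C) (hα : ∀ h ∈ C, α ∘ h ∈ C)
    (hαsymm : ∀ h ∈ C, α.symm ∘ h ∈ C) (hf : f ∈ EllisZ α) (hg : g ∈ C) : f ∘ g ∈ C := by
  have hiterate {T : X → X} (hT : ∀ h ∈ C, T ∘ h ∈ C) (n : ℕ) : T^[n] ∘ g ∈ C := by
    induction n with
    | zero => exact hg
    | succ n ih => exact Function.iterate_succ' T n ▸ hT _ ih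
  exact ellisZ_subset_of_isClosed (hC.preimage (Pi.continuous_precomp g)) (hiterate hα)
    (hiterate hαsymm) hf

theorem homeomorph_comp_mem_ellisZ (hf : f ∈ EllisZ α) : α ∘ f ∈ EllisZ α := by
  refine ellisZ_subset_of_isClosed (C := (α ∘ ·) ⁻¹' EllisZ α)
    (isClosed_ellisZ.preimage (Pi.continuous_postcomp α.continuous)) (fun n => ?_) (fun n => ?_) hf
  · rw [mem_preimage, ← Function.iterate_succ']
    exact iterate_mem_ellisZ α (n + 1)
  · cases n with
    | zero => exact iterate_mem_ellisZ α 1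
    | succ n =>
      rw [mem_preimage, Function.iterate_succ', ← Function.comp_assoc, α.self_comp_symm,
        Function.id_comp, ← ellisZ_symm]
      exact iterate_mem_ellisZ α.symm n

theorem comp_mem_ellisZ (hf : f ∈ EllisZ α) (hg : g ∈ EllisZ α) : f ∘ g ∈ EllisZ α :=
  comp_mem_of_mem_ellisZ isClosed_ellisZ (fun _ => homeomorph_comp_mem_ellisZ)
    (fun _ => by simpa only [ellisZ_symm] using homeomorph_comp_mem_ellisZ (α := α.symm)) hf hg

theorem comp_iterate_eq_of_mem_ellisZ [T2Space X] (hf : f ∈ EllisZ α) (n : ℕ) :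
    f ∘ α^[n] = α^[n] ∘ f := by
  refine ellisZ_subset_of_isClosed (C := {h | h ∘ α^[n] = α^[n] ∘ h})
    (isClosed_eq (Pi.continuous_precomp _) (Pi.continuous_postcomp (α.continuous.iterate n)))
    (fun m => ?_) (fun m => ?_) hf
  · exact ((Function.Commute.refl α).iterate_iterate m n).comp_eq
  · have hcomm : Function.Commute α.symm α := fun x => by simp
    exact (hcomm.iterate_iterate m n).comp_eq

theorem exists_inverse_mem_ellisZ_iterate (α : X ≃ₜ X) (n : ℕ) :
    ∃ g ∈ EllisZ α, α^[n] ∘ g = id ∧ g ∘ α^[n] = id :=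
  ⟨α.symm^[n], ellisZ_symm α ▸ iterate_mem_ellisZ α.symm n,
    (Function.RightInverse.iterate α.right_inv n).id,
    (Function.LeftInverse.iterate α.left_inv n).id⟩

theorem forwardLimits_subset_ellisZ (α : X ≃ₜ X) : forwardLimits α ⊆ EllisZ α := fun _ hf =>
  isClosed_ellisZ.mem_of_mapClusterPt hf (Eventually.of_forall (iterate_mem_ellisZ α))

theorem comp_mem_forwardLimits (hf : f ∈ EllisZ α) (hg : g ∈ forwardLimits α) :
    f ∘ g ∈ forwardLimits α := by
  refine comp_mem_of_mem_ellisZ isClosed_forwardLimits (fun h hh => ?_) (fun h hh => ?_) hf hg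
  · have hcomp := MapClusterPt.continuousAt_comp
      (Pi.continuous_postcomp (ι := X) α.continuous).continuousAt hh
    refine MapClusterPt.of_comp (tendsto_add_atTop_nat 1) (hcomp.congrFun ?_)
    exact Eventually.of_forall fun n => (Function.iterate_succ' α n).symm
  · have hcomp := MapClusterPt.continuousAt_comp
      (Pi.continuous_postcomp (ι := X) α.symm.continuous).continuousAt hh
    refine MapClusterPt.of_comp (tendsto_sub_atTop_nat 1) (hcomp.congrFun ?_)
    filter_upwards [eventually_ge_atTop 1] with n hn
    obtain ⟨m, rfl⟩ := Nat.exists_eq_add_of_le' hn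
    funext x
    simp only [Function.comp_apply, Function.iterate_succ_apply', Homeomorph.symm_apply_apply,
      Nat.add_sub_cancel]

theorem isLeftIdealIn_forwardLimits [CompactSpace X] (α : X ≃ₜ X) :
    IsLeftIdealIn (EllisZ α) (forwardLimits α) :=
  ⟨forwardLimits_nonempty, forwardLimits_subset_ellisZ α, fun _ hf _ => comp_mem_forwardLimits hf⟩

theorem mem_ellisZ_cases [T1Space X] (hf : f ∈ EllisZ α) :
    (∃ n : ℕ, f = α^[n] ∨ f = α.symm^[n]) ∨ f ∈ forwardLimits α ∪ forwardLimits α.symm := by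
  rw [ellisZ_eq_closure_union_range_iterate, closure_union] at hf
  obtain hf | hf := hf
  · obtain ⟨n, rfl⟩ | hlim := mem_range_iterate_or_mem_forwardLimits hf
    exacts [Or.inl ⟨n, Or.inl rfl⟩, Or.inr (Or.inl hlim)]
  · obtain ⟨n, rfl⟩ | hlim := mem_range_iterate_or_mem_forwardLimits hf
    exacts [Or.inl ⟨n, Or.inr rfl⟩, Or.inr (Or.inr hlim)]

theorem isIdealIn_forwardLimits_union_symm [CompactSpace X] [T2Space X] (α : X ≃ₜ X) :
    IsIdealIn (EllisZ α) (forwardLimits α ∪ forwardLimits α.symm) := by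
  have hfwd := isLeftIdealIn_forwardLimits α
  have hbwd := ellisZ_symm α ▸ isLeftIdealIn_forwardLimits α.symm
  have hsub : forwardLimits α ∪ forwardLimits α.symm ⊆ EllisZ α := union_subset hfwd.2.1 hbwd.2.1
  have hleft : ∀ f ∈ EllisZ α, ∀ g ∈ forwardLimits α ∪ forwardLimits α.symm,
      f ∘ g ∈ forwardLimits α ∪ forwardLimits α.symm := fun f hf g hg =>
    hg.imp (hfwd.2.2 f hf g) (hbwd.2.2 f hf g)
  refine ⟨hfwd.1.inl, hsub, fun f hf g hg => ⟨hleft f hf g hg, ?_⟩⟩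
  obtain ⟨n, rfl | rfl⟩ | hlim := mem_ellisZ_cases hf
  · rw [comp_iterate_eq_of_mem_ellisZ (hsub hg)]
    exact hleft _ hf g hg
  · rw [comp_iterate_eq_of_mem_ellisZ (ellisZ_symm α ▸ hsub hg)]
    exact hleft _ hf g hg
  · exact hleft g (hsub hg) f hlim

theorem NearlySimpleZ.completelyRegularZ [CompactSpace X] [T2Space X] (h : NearlySimpleZ α) :
    CompletelyRegularZ α := by
  obtain ⟨K, hK, hmin, -, hinv⟩ := h
  intro f hf
  by_cases hunit : ∃ g ∈ EllisZ α, f ∘ g = id ∧ g ∘ f = id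
  · obtain ⟨g, hg, hfg, hgf⟩ := hunit
    exact ⟨g, hg, by rw [hgf, Function.comp_id], by rw [hfg, hgf]⟩
  · have hc : IsCompact (EllisZ α) := isClosed_ellisZ.isCompact
    have hcomp : ∀ f ∈ EllisZ α, ∀ g ∈ EllisZ α, f ∘ g ∈ EllisZ α :=
      fun _ hf _ => comp_mem_ellisZ hf
    have hKmin : Minimal (IsIdealIn (EllisZ α)) K := ⟨hK, fun I hI hIK => (hmin I hI hIK).ge⟩
    obtain ⟨L, hL, hfL⟩ :=
      IsIdealIn.exists_minimal_isLeftIdealIn_mem hc hcomp hKmin (hinv f hf hunit)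
    exact IsLeftIdealIn.exists_groupInverse_of_minimal hc hcomp hL hfL

theorem nearlySimpleZ_of_isForwardAlmostDistal {X : Type*} [UniformSpace X] [CompactSpace X]
    [T2Space X] {α : X ≃ₜ X} (hfwd : IsForwardAlmostDistal α)
    (hbwd : IsForwardAlmostDistal α.symm) : NearlySimpleZ α := by
  have hleast : ∀ I, IsIdealIn (EllisZ α) I → forwardLimits α ∪ forwardLimits α.symm ⊆ I := by
    have hsub (β : X ≃ₜ X) (hβ : IsForwardAlmostDistal β) (I : Set (X → X))
        (hI : IsIdealIn (EllisZ β) I) : forwardLimits β ⊆ I :=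
      (isLeftIdealIn_forwardLimits β).subset_of_isIdealIn_of_forall_fiber_eq
        isClosed_ellisZ.isCompact (fun _ hf _ => comp_mem_ellisZ hf)
        (isForwardAlmostDistal_iff_forall_fiber_eq.1 hβ) hI
    exact fun I hI => union_subset (hsub α hfwd I hI)
      (hsub α.symm hbwd I (ellisZ_symm α ▸ hI))
  have hK := isIdealIn_forwardLimits_union_symm α
  refine ⟨_, hK, fun I hI hIK => hIK.antisymm (hleast I hI),
    fun I hI hmin => (hmin _ hK (hleast I hI)).symm, fun f hf hunit => ?_⟩
  refine (mem_ellisZ_cases hf).resolve_left ?_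
  rintro ⟨n, rfl | rfl⟩
  · exact hunit (exists_inverse_mem_ellisZ_iterate α n)
  · exact hunit (ellisZ_symm α ▸ exists_inverse_mem_ellisZ_iterate α.symm n)

end Ellis

section LastExit

theorem exists_last_time_before_gap {p : ℕ → Prop} (hp : ∃ᶠ n in atTop, p n)
    (hgap : ∀ m, ∃ᶠ n in atTop, ∀ j ≤ m, ¬ p (j + n)) (i : ℕ) :
    ∃ n ≥ i, p n ∧ ∀ j, 1 ≤ j → j ≤ i → ¬ p (j + n) := by
  classical
  obtain ⟨d, hid, hpd⟩ := frequently_atTop.1 hp i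
  obtain ⟨n, hdn, hn⟩ := frequently_atTop.1 (hgap i) d
  refine ⟨Nat.findGreatest p n, hid.trans (Nat.le_findGreatest hdn hpd),
    Nat.findGreatest_spec hdn hpd, fun j hj hji => ?_⟩
  by_cases hle : j + Nat.findGreatest p n ≤ n
  · exact Nat.findGreatest_is_greatest (by omega) hle
  · obtain ⟨k, hk⟩ := Nat.exists_eq_add_of_le' (not_le.1 hle).le
    have hgreatest := Nat.findGreatest_le (P := p) n
    exact hk ▸ hn k (by omega)

variable {X : Type*} [TopologicalSpace X] {T e : X → X} {x y : X} {W : Set (X × X)}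

theorem frequently_pair_mem_of_eq_of_mem_forwardLimits (hT : Continuous T)
    (he : e ∈ forwardLimits T) (hxy : e x = e y) (hW : IsOpen W) (hdiag : diagonal X ⊆ W) (m : ℕ) :
    ∃ᶠ n in atTop, ∀ j ≤ m, (T^[j + n] x, T^[j + n] y) ∈ W := by
  have hnhds : {p : X × X | ∀ j ≤ m, (T^[j] p.1, T^[j] p.2) ∈ W} ∈ 𝓝 (e x, e y) := by
    refine (eventually_all_finite (finite_Iic m)).2 fun j _ => ?_
    have hcont : Continuous fun p : X × X => (T^[j] p.1, T^[j] p.2) :=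
      (hT.iterate j).prodMap (hT.iterate j)
    exact (hW.preimage hcont).mem_nhds (hdiag (congrArg T^[j] hxy))
  simp only [Function.iterate_add_apply]
  exact frequently_pair_mem_of_mem_forwardLimits he hnhds

theorem exists_mem_forwardLimits_last_exit [CompactSpace X] (hT : Continuous T) (hW : IsClopen W)
    (hexit : ∃ᶠ n in atTop, (T^[n] x, T^[n] y) ∉ W)
    (hstay : ∀ m, ∃ᶠ n in atTop, ∀ j ≤ m, (T^[j + n] x, T^[j + n] y) ∈ W) :
    ∃ f ∈ forwardLimits T, (f x, f y) ∉ W ∧ ∀ k ≥ 1, (T^[k] (f x), T^[k] (f y)) ∈ W := by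
  choose n hni hout hin using exists_last_time_before_gap hexit (by simpa only [not_not])
  obtain ⟨f, hf⟩ : ∃ f, MapClusterPt f atTop fun i => T^[n i] := exists_clusterPt_of_compactSpace _
  have hpair (k : ℕ) : MapClusterPt (T^[k] (f x), T^[k] (f y)) atTop
      fun i => (T^[k] (T^[n i] x), T^[k] (T^[n i] y)) :=
    MapClusterPt.continuousAt_comp (f := fun h : X → X => (T^[k] (h x), T^[k] (h y)))
      (((hT.iterate k).comp (continuous_apply x)).prodMk
        ((hT.iterate k).comp (continuous_apply y))).continuousAt hf
  refine ⟨f, hf.of_comp (tendsto_atTop_mono hni tendsto_id), ?_, fun k hk => ?_⟩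
  · exact hW.compl.isClosed.mem_of_mapClusterPt (hpair 0) (Eventually.of_forall hout)
  · refine hW.isClosed.mem_of_mapClusterPt (hpair k) ?_
    filter_upwards [eventually_ge_atTop k] with i hki
    simpa only [not_not, Function.iterate_add_apply] using hin i k hk hki

theorem CompletelyRegularZ.eventually_pair_mem [CompactSpace X] {α : X ≃ₜ X}
    (hreg : CompletelyRegularZ α) (he : e ∈ forwardLimits α) (hxy : e x = e y) (hW : IsClopen W)
    (hdiag : diagonal X ⊆ W) : ∀ᶠ n in atTop, (α^[n] x, α^[n] y) ∈ W := by
  by_contra hexit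
  obtain ⟨f, hf, hout, hin⟩ := exists_mem_forwardLimits_last_exit α.continuous hW
    (not_eventually.1 hexit)
    (frequently_pair_mem_of_eq_of_mem_forwardLimits α.continuous he hxy hW.isOpen hdiag)
  obtain ⟨g, hg, hfgf, hcomm⟩ := hreg f (forwardLimits_subset_ellisZ α hf)
  have hgff (z : X) : g (f (f z)) = f z :=
    (congrFun hcomm (f z)).symm.trans (congrFun hfgf z)
  have hmem : (g (f (f x)), g (f (f y))) ∈ W :=
    pair_mem_of_mem_forwardLimits (f := g ∘ f) (comp_mem_forwardLimits hg hf) hW.isClosed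
      ((eventually_ge_atTop 1).mono hin)
  rw [hgff, hgff] at hmem
  exact hout hmem

theorem CompletelyRegularZ.isForwardAlmostDistal {X : Type*} [UniformSpace X] [CompactSpace X]
    [T2Space X] [TotallyDisconnectedSpace X] {α : X ≃ₜ X} (hreg : CompletelyRegularZ α) :
    IsForwardAlmostDistal α := by
  rw [isForwardAlmostDistal_iff_forall_fiber_eq]
  intro e he f hf x y hxy
  by_contra hne
  have hpair : (f x, f y) ∉ diagonal X := hne
  obtain ⟨W, hW, hdiag, hWne⟩ := exists_clopen_of_closed_subset_open isClosed_diagonal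
    isOpen_compl_singleton (subset_compl_singleton_iff.2 hpair)
  exact hWne (pair_mem_of_mem_forwardLimits hf hW.isClosed
    (hreg.eventually_pair_mem he hxy hW hdiag)) rfl

end LastExit

theorem totallyDisconnectedSpace_of_basis_isClopen {X : Type*} [TopologicalSpace X] [T0Space X]
    {B : Set (Set X)} (hclopen : ∀ U ∈ B, IsClopen U)
    (hB : TopologicalSpace.IsTopologicalBasis B) : TotallyDisconnectedSpace X := by
  have : TotallySeparatedSpace X := totallySeparatedSpace_of_t0_of_basis_clopen
    (hB.of_isOpen_of_subset (fun _ hU => hU.isOpen) hclopen)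
  infer_instance

theorem stmt_19_general {X : Type*} [UniformSpace X] [CompactSpace X] [T2Space X]
    [TotallyDisconnectedSpace X] (α : X ≃ₜ X) :
    (IsForwardAlmostDistal α ∧ IsForwardAlmostDistal α.symm ↔ NearlySimpleZ α) ∧
    (NearlySimpleZ α ↔ CompletelyRegularZ α) := by
  have hsimple (h : IsForwardAlmostDistal α ∧ IsForwardAlmostDistal α.symm) : NearlySimpleZ α :=
    nearlySimpleZ_of_isForwardAlmostDistal h.1 h.2
  have hdistal (h : CompletelyRegularZ α) :
      IsForwardAlmostDistal α ∧ IsForwardAlmostDistal α.symm := by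
    have hsymm : CompletelyRegularZ α.symm := by rwa [CompletelyRegularZ, ellisZ_symm]
    exact ⟨h.isForwardAlmostDistal, hsymm.isForwardAlmostDistal⟩
  exact ⟨⟨hsimple, fun h => hdistal h.completelyRegularZ⟩,
    ⟨NearlySimpleZ.completelyRegularZ, fun h => hsimple (hdistal h)⟩⟩

/-- For a homeomorphism `α` of a totally disconnected compact metric space,
the `ℤ`-action is almost distal iff `E` is nearly simple iff `E` is completely regular. -/
theorem stmt_19 {X : Type*} [MetricSpace X] [CompactSpace X]
    (hbasis : ∃ B : Set (Set X),
      (∀ U ∈ B, IsClopen U) ∧ TopologicalSpace.IsTopologicalBasis B)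
    (α : X ≃ₜ X) :
    (AlmostDistalZ α ↔ NearlySimpleZ α) ∧
    (NearlySimpleZ α ↔ CompletelyRegularZ α) := by
  obtain ⟨B, hclopen, hB⟩ := hbasis
  have := totallyDisconnectedSpace_of_basis_isClopen hclopen hB
  rw [almostDistalZ_iff_isForwardAlmostDistal]
  exact stmt_19_general α
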